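/- For every integer b ≥ 2 and every integer k with 1 ≤ k ≤ b − 1, limsup_{N→∞} P_{b,N}(k) = b/((k+1)(b − 1)). -/

import Mathlib

/-- The leading digit of `x` in base `b`: `⌊x / b^⌊log_b x⌋⌋`. -/
def leadingDigit (b x : ℕ) : ℕ := x / b ^ Nat.log b x

/-- `P b N k` is the frequency of leading digit `k` among `1, …, N` in base `b`. -/
noncomputable def leadingDigitFreq (b N k : ℕ) : ℝ :=
  (((Finset.Icc 1 N).filter (fun x => leadingDigit b x = k)).card : ℝ) / N

/-!
The numbers with leading digit `k` are those in the blocks `[k * b ^ n, (k + 1) * b ^ n)`. Let `c M`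
count the ones below `M`. If `b ^ n ≤ M ≤ b ^ (n + 1)` and `t ≤ b ^ n` of them lie in block `n`,
then `(b - 1) * c M = b ^ n - 1 + (b - 1) * t` and `b ^ n + k * t ≤ M`, whence
`(k + 1) * (b - 1) * c M + (k + 1) ≤ b * M`, with equality when `M` is the right end of a block.
Dividing by `N = M - 1` bounds the frequency at `N` by `b / ((k + 1) * (b - 1))` plus an explicit
multiple of `1 / N`, and the bound is attained for infinitely many `N`.
-/

open Filter Finset Topology

theorem limsup_eq_of_eventually_le_of_frequently_ge {ι α : Type*}
    [ConditionallyCompleteLinearOrder α] [TopologicalSpace α] [OrderTopology α]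
    {f : Filter ι} {u v : ι → α} {a : α} (hv : Tendsto v f (𝓝 a))
    (hle : ∀ᶠ i in f, u i ≤ v i) (hge : ∃ᶠ i in f, v i ≤ u i) : limsup u f = a := by
  have : f.NeBot := (frequently_true_iff_neBot f).1 (hge.mono fun _ _ ↦ trivial)
  have hbdd : IsBoundedUnder (· ≤ ·) f u := hv.isBoundedUnder_le.mono_le hle
  have hcobdd : IsCoboundedUnder (· ≤ ·) f u := by
    obtain ⟨c, hc⟩ := hv.isBoundedUnder_ge
    exact .of_frequently_ge ((hge.and_eventually hc).mono fun _ h ↦ h.2.trans h.1)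
  apply le_antisymm
  · exact (limsup_le_limsup hle hcobdd hv.isBoundedUnder_le).trans_eq hv.limsup_eq
  · rw [← hv.liminf_eq]
    exact liminf_le_limsup_of_frequently_le hge hv.isBoundedUnder_ge hbdd

section Count

variable {b k n M : ℕ}

theorem leadingDigit_zero (b : ℕ) : leadingDigit b 0 = 0 := Nat.zero_div _

theorem leadingDigit_eq_iff {x : ℕ} (hx : b ^ n ≤ x) (hx' : x < b ^ (n + 1)) :
    leadingDigit b x = k ↔ k * b ^ n ≤ x ∧ x < (k + 1) * b ^ n := by
  have hb : b ≠ 0 := by rintro rfl; simp at hx'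
  rw [leadingDigit, Nat.log_eq_of_pow_le_of_lt_pow hx hx',
    Nat.div_eq_iff (by positivity : 0 < b ^ n)]
  grind

theorem filter_leadingDigit_Ico_pow (hk : 0 < k) (hM : M ≤ b ^ (n + 1)) :
    {x ∈ Ico (b ^ n) M | leadingDigit b x = k} =
      Ico (k * b ^ n) (min M ((k + 1) * b ^ n)) := by
  ext x
  have hkn : b ^ n ≤ k * b ^ n := Nat.le_mul_of_pos_left _ hk
  simp only [mem_filter, mem_Ico, lt_min_iff]
  constructor
  · rintro ⟨⟨hx, hxM⟩, hxk⟩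
    rw [leadingDigit_eq_iff hx (hxM.trans_le hM)] at hxk
    exact ⟨hxk.1, hxM, hxk.2⟩
  · rintro ⟨hx, hxM, hx'⟩
    have hnx := hkn.trans hx
    exact ⟨⟨hnx, hxM⟩, (leadingDigit_eq_iff hnx (hxM.trans_le hM)).2 ⟨hx, hx'⟩⟩

theorem count_leadingDigit_eq_add (hk : 0 < k) (hM : b ^ n ≤ M) (hM' : M ≤ b ^ (n + 1)) :
    Nat.count (leadingDigit b · = k) M =
      Nat.count (leadingDigit b · = k) (b ^ n) + (min M ((k + 1) * b ^ n) - k * b ^ n) := by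
  simp only [Nat.count_eq_card_filter_range, range_eq_Ico]
  rw [← Ico_union_Ico_eq_Ico (Nat.zero_le _) hM, filter_union,
    card_union_of_disjoint (disjoint_filter_filter (Ico_disjoint_Ico_consecutive _ _ _)),
    filter_leadingDigit_Ico_pow hk hM', Nat.card_Ico]

theorem count_leadingDigit_of_succ_mul_pow_le (hk : 0 < k) (hM : (k + 1) * b ^ n ≤ M)
    (hM' : M ≤ b ^ (n + 1)) :
    Nat.count (leadingDigit b · = k) M = Nat.count (leadingDigit b · = k) (b ^ n) + b ^ n := by
  have hn : b ^ n ≤ M := (Nat.le_mul_of_pos_left _ k.succ_pos).trans hM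
  rw [count_leadingDigit_eq_add hk hn hM', min_eq_right hM, ← Nat.sub_mul, Nat.add_sub_cancel_left,
    one_mul]

theorem succ_mul_pow_le_pow_succ (hkb : k < b) (n : ℕ) : (k + 1) * b ^ n ≤ b ^ (n + 1) := by
  rw [pow_succ']
  exact Nat.mul_le_mul_right _ hkb

theorem count_leadingDigit_pow (hk : 0 < k) (hkb : k < b) (n : ℕ) :
    Nat.count (leadingDigit b · = k) (b ^ n) = ∑ i ∈ range n, b ^ i := by
  induction n with
  | zero => simp [Nat.count_eq_card_filter_range, leadingDigit_zero, hk.ne]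
  | succ n ih =>
    rw [count_leadingDigit_of_succ_mul_pow_le hk (succ_mul_pow_le_pow_succ hkb n) le_rfl, ih,
      sum_range_succ]

theorem count_leadingDigit_succ_mul_pow (hk : 0 < k) (hkb : k < b) (n : ℕ) :
    Nat.count (leadingDigit b · = k) ((k + 1) * b ^ n) = ∑ i ∈ range (n + 1), b ^ i := by
  rw [count_leadingDigit_of_succ_mul_pow_le hk le_rfl (succ_mul_pow_le_pow_succ hkb n),
    count_leadingDigit_pow hk hkb, sum_range_succ]

theorem mul_count_leadingDigit_succ_mul_pow_add (hk : 0 < k) (hkb : k < b) (n : ℕ) :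
    ((k : ℝ) + 1) * (b - 1) * Nat.count (leadingDigit b · = k) ((k + 1) * b ^ n) + (k + 1) =
      b * ((k + 1) * b ^ n : ℕ) := by
  rw [count_leadingDigit_succ_mul_pow hk hkb]
  push_cast
  linear_combination ((k : ℝ) + 1) * geom_sum_mul (b : ℝ) (n + 1)

theorem mul_count_leadingDigit_add_le (hk : 0 < k) (hkb : k < b) (hM : M ≠ 0) :
    ((k : ℝ) + 1) * (b - 1) * Nat.count (leadingDigit b · = k) M + (k + 1) ≤ b * M := by
  set n := Nat.log b M
  have hn : b ^ n ≤ M := Nat.pow_log_le_self b hM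
  have hn' : M ≤ b ^ (n + 1) := (Nat.lt_pow_succ_log_self (by lia) M).le
  obtain ⟨t, ht⟩ : ∃ t, t = min M ((k + 1) * b ^ n) - k * b ^ n := ⟨_, rfl⟩
  have htn : t ≤ b ^ n := by
    rw [add_one_mul] at ht
    lia
  have htM : b ^ n + k * t ≤ M := by
    rcases t.eq_zero_or_pos with rfl | ht0
    · simpa using hn
    · calc b ^ n + k * t ≤ k * b ^ n + t := by nlinarith
        _ ≤ M := by lia
  rw [count_leadingDigit_eq_add hk hn hn', count_leadingDigit_pow hk hkb, ← ht]
  have hgeom := geom_sum_mul (b : ℝ) n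
  have hkb' : (k : ℝ) + 1 ≤ b := mod_cast hkb
  rify at htn htM
  push_cast
  calc ((k : ℝ) + 1) * (b - 1) * (∑ i ∈ range n, (b : ℝ) ^ i + t) + (k + 1)
      = (k + 1) * b ^ n + (k + 1) * (b - 1) * t := by linear_combination (k + 1) * hgeom
    _ = (k + 1) * b ^ n + b * k * t + (b - (k + 1)) * t := by ring
    _ ≤ (k + 1) * b ^ n + b * k * t + (b - (k + 1)) * b ^ n := by gcongr
    _ = b * (b ^ n + k * t) := by ring
    _ ≤ b * M := by gcongr

theorem leadingDigitFreq_eq_count_div (hk : 0 < k) (N : ℕ) :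
    leadingDigitFreq b N k = (Nat.count (leadingDigit b · = k) (N + 1) : ℝ) / N := by
  rw [leadingDigitFreq, Nat.count_eq_card_filter_range]
  congr 3
  ext x
  rcases x.eq_zero_or_pos with rfl | hx
  · simp [leadingDigit_zero, hk.ne]
  · simp [Nat.succ_le_iff, hx]

theorem leadingDigitFreq_le (hk : 0 < k) (hkb : k < b) {N : ℕ} (hN : N ≠ 0) :
    leadingDigitFreq b N k ≤
      b / ((k + 1) * (b - 1)) + (b - (k + 1)) / ((k + 1) * (b - 1)) / N := by
  have hb : (0 : ℝ) < b - 1 := sub_pos.2 (mod_cast Nat.lt_of_le_of_lt hk hkb)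
  have hcount := mul_count_leadingDigit_add_le hk hkb N.succ_ne_zero
  rw [leadingDigitFreq_eq_count_div hk]
  calc (Nat.count (leadingDigit b · = k) (N + 1) : ℝ) / N
      ≤ (b * (N + 1 : ℕ) - (k + 1)) / ((k + 1) * (b - 1)) / N := by
        gcongr
        rw [le_div_iff₀' (by positivity)]
        linarith
    _ = b / ((k + 1) * (b - 1)) + (b - (k + 1)) / ((k + 1) * (b - 1)) / N := by
        push_cast
        field_simp
        ring

theorem leadingDigitFreq_succ_mul_pow_sub_one (hk : 0 < k) (hkb : k < b) (n : ℕ) :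
    leadingDigitFreq b ((k + 1) * b ^ n - 1) k =
      b / ((k + 1) * (b - 1)) +
        (b - (k + 1)) / ((k + 1) * (b - 1)) / ((k + 1) * b ^ n - 1 : ℕ) := by
  have hb : (b : ℝ) - 1 ≠ 0 := (sub_pos.2 (mod_cast Nat.lt_of_le_of_lt hk hkb)).ne'
  have hcount := mul_count_leadingDigit_succ_mul_pow_add hk hkb n
  obtain ⟨N, hN, hN0⟩ : ∃ N, (k + 1) * b ^ n = N + 1 ∧ N ≠ 0 := by
    have : 2 * 1 ≤ (k + 1) * b ^ n :=
      Nat.mul_le_mul (Nat.succ_le_succ hk) (Nat.pow_pos (hk.trans hkb))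
    exact ⟨(k + 1) * b ^ n - 1, by lia, by lia⟩
  rw [hN] at hcount ⊢
  rw [Nat.add_sub_cancel, leadingDigitFreq_eq_count_div hk]
  push_cast at hcount
  field_simp
  linear_combination hcount

end Count

theorem freq_limsup (b k : ℕ) (hb : 2 ≤ b) (hk1 : 1 ≤ k) (hk2 : k ≤ b - 1) :
    Filter.limsup (fun N : ℕ => leadingDigitFreq b N k) Filter.atTop
      = (b : ℝ) / (((k : ℝ) + 1) * ((b : ℝ) - 1)) := by
  have hkb : k < b := by lia
  have hend : Tendsto (fun n ↦ (k + 1) * b ^ n - 1) atTop atTop :=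
    (tendsto_sub_atTop_nat 1).comp <|
      (tendsto_pow_atTop_atTop_of_one_lt hb).const_mul_atTop' k.succ_pos
  refine limsup_eq_of_eventually_le_of_frequently_ge
    (v := fun N : ℕ ↦ (b : ℝ) / ((k + 1) * (b - 1)) + (b - (k + 1)) / ((k + 1) * (b - 1)) / N)
    ?_ ?_ ?_
  · simpa only [add_zero] using (tendsto_const_div_atTop_nhds_zero_nat _).const_add (_ : ℝ)
  · filter_upwards [eventually_ne_atTop 0] with N hN using leadingDigitFreq_le hk1 hkb hN
  · exact hend.frequently <| .of_forall fun n ↦ (leadingDigitFreq_succ_mul_pow_sub_one hk1 hkb n).ge
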